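/- arXiv:2604.16549 — 2 statements merged into one kernel-verified Lean document; each statement's English description precedes it below -/
import Mathlib

section
/- Let ν, I, K, q₁, g, r be positive reals, α ∈ (0, π/2), set G = π g r sin α, σ = ν/(I K), and ρ = G q₁/(ν K²). Suppose a₁, b₁, ω : ℝ → ℝ are differentiable and solve the reduced waterwheel system ȧ₁ = ω b₁ − K a₁, ḃ₁ = −ω a₁ − K b₁ + q₁, ω̇ = −(ν/I) ω + (G/I) a₁. Define x(τ) = ω(τ/K)/K, y(τ) = G·a₁(τ/K)/(ν K), and z(τ) = ρ − G·b₁(τ/K)/(ν K). Then (x, y, z) is differentiable and solves the Lorenz system x' = σ(y − x), y' = ρx − xz − y, z' = xy − z. -/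
/-!
The time change `t = τ / K` multiplies each derivative by `1 / K`, so only three rational
identities remain. The offset `ρ` in `z` cancels the term `ρ x` in the `y` equation, and the choice
`ρ = G q₁ / (ν K²)` absorbs the inflow `q₁` in the `z` equation.
-/

section Waterwheel

variable {𝕜 : Type*} [NontriviallyNormedField 𝕜]

/-- The reduced Malkus–Lorenz waterwheel equations, holding at time `t`. The gravitational torque
coefficient `π g r sin α` enters only through its value `G`. -/
structure IsWaterwheelSolutionAt (ν I K q₁ G : 𝕜) (a₁ b₁ ω : 𝕜 → 𝕜) (t : 𝕜) : Prop where
  hasDerivAt_a₁ : HasDerivAt a₁ (ω t * b₁ t - K * a₁ t) t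
  hasDerivAt_b₁ : HasDerivAt b₁ (-(ω t) * a₁ t - K * b₁ t + q₁) t
  hasDerivAt_ω : HasDerivAt ω (-(ν / I) * ω t + (G / I) * a₁ t) t

/-- The Lorenz equations with unit geometric parameter, holding at time `τ`. -/
structure IsLorenzSolutionAt (σ ρ : 𝕜) (x y z : 𝕜 → 𝕜) (τ : 𝕜) : Prop where
  hasDerivAt_x : HasDerivAt x (σ * (y τ - x τ)) τ
  hasDerivAt_y : HasDerivAt y (ρ * x τ - x τ * z τ - y τ) τ
  hasDerivAt_z : HasDerivAt z (x τ * y τ - z τ) τ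

theorem forall_isWaterwheelSolutionAt_iff {ν I K q₁ G : 𝕜} {a₁ b₁ ω : 𝕜 → 𝕜} :
    (∀ t, IsWaterwheelSolutionAt ν I K q₁ G a₁ b₁ ω t) ↔
      Differentiable 𝕜 a₁ ∧ Differentiable 𝕜 b₁ ∧ Differentiable 𝕜 ω ∧
        (∀ t, deriv a₁ t = ω t * b₁ t - K * a₁ t) ∧
        (∀ t, deriv b₁ t = -(ω t) * a₁ t - K * b₁ t + q₁) ∧
        (∀ t, deriv ω t = -(ν / I) * ω t + (G / I) * a₁ t) := by
  constructor
  · intro h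
    exact ⟨fun t => (h t).hasDerivAt_a₁.differentiableAt,
      fun t => (h t).hasDerivAt_b₁.differentiableAt, fun t => (h t).hasDerivAt_ω.differentiableAt,
      fun t => (h t).hasDerivAt_a₁.deriv, fun t => (h t).hasDerivAt_b₁.deriv,
      fun t => (h t).hasDerivAt_ω.deriv⟩
  · rintro ⟨hda, hdb, hdω, heqa, heqb, heqω⟩ t
    exact ⟨heqa t ▸ (hda t).hasDerivAt, heqb t ▸ (hdb t).hasDerivAt, heqω t ▸ (hdω t).hasDerivAt⟩

theorem forall_isLorenzSolutionAt_iff {σ ρ : 𝕜} {x y z : 𝕜 → 𝕜} :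
    (∀ τ, IsLorenzSolutionAt σ ρ x y z τ) ↔
      Differentiable 𝕜 x ∧ Differentiable 𝕜 y ∧ Differentiable 𝕜 z ∧
        (∀ τ, deriv x τ = σ * (y τ - x τ)) ∧
        (∀ τ, deriv y τ = ρ * x τ - x τ * z τ - y τ) ∧
        (∀ τ, deriv z τ = x τ * y τ - z τ) := by
  constructor
  · intro h
    exact ⟨fun τ => (h τ).hasDerivAt_x.differentiableAt,
      fun τ => (h τ).hasDerivAt_y.differentiableAt, fun τ => (h τ).hasDerivAt_z.differentiableAt,
      fun τ => (h τ).hasDerivAt_x.deriv, fun τ => (h τ).hasDerivAt_y.deriv,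
      fun τ => (h τ).hasDerivAt_z.deriv⟩
  · rintro ⟨hdx, hdy, hdz, heqx, heqy, heqz⟩ τ
    exact ⟨heqx τ ▸ (hdx τ).hasDerivAt, heqy τ ▸ (hdy τ).hasDerivAt, heqz τ ▸ (hdz τ).hasDerivAt⟩

/-- The Prandtl number of the waterwheel: the parameter `σ` of the associated Lorenz system. -/
def prandtlNumber (ν I K : 𝕜) : 𝕜 := ν / (I * K)

/-- The Rayleigh number of the waterwheel: the parameter `ρ` of the associated Lorenz system. -/
def rayleighNumber (ν K q₁ G : 𝕜) : 𝕜 := G * q₁ / (ν * K ^ 2)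

/-- The Lorenz variable `x`: the angular velocity in units of the leakage rate, as a function of
the rescaled time `τ = K t`. -/
def lorenzX (K : 𝕜) (ω : 𝕜 → 𝕜) (τ : 𝕜) : 𝕜 := ω (τ / K) / K

/-- The Lorenz variable `y`, a multiple of the mode `a₁` that drives the rotation. -/
def lorenzY (ν K G : 𝕜) (a₁ : 𝕜 → 𝕜) (τ : 𝕜) : 𝕜 := G * a₁ (τ / K) / (ν * K)

/-- The Lorenz variable `z`: the deviation of the rescaled mode `b₁` from a reference value `ρ`,
which is left free here. -/
def lorenzZ (ν K G ρ : 𝕜) (b₁ : 𝕜 → 𝕜) (τ : 𝕜) : 𝕜 := ρ - G * b₁ (τ / K) / (ν * K)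

theorem hasDerivAt_comp_div_const {E : Type*} [NormedAddCommGroup E] [NormedSpace 𝕜 E] {f : 𝕜 → E}
    {f' : E} {K τ : 𝕜} (hf : HasDerivAt f f' (τ / K)) :
    HasDerivAt (fun s => f (s / K)) (K⁻¹ • f') τ := by
  simpa only [one_div, Function.comp_def] using hf.scomp τ ((hasDerivAt_id' τ).div_const K)

variable {ν I K q₁ G τ : 𝕜} {a₁ b₁ ω : 𝕜 → 𝕜}

namespace IsWaterwheelSolutionAt

theorem hasDerivAt_lorenzX (hν : ν ≠ 0) (hI : I ≠ 0) (hK : K ≠ 0)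
    (h : IsWaterwheelSolutionAt ν I K q₁ G a₁ b₁ ω (τ / K)) :
    HasDerivAt (lorenzX K ω)
      (prandtlNumber ν I K * (lorenzY ν K G a₁ τ - lorenzX K ω τ)) τ := by
  refine ((hasDerivAt_comp_div_const h.hasDerivAt_ω).div_const K).congr_deriv ?_
  simp only [prandtlNumber, lorenzX, lorenzY, smul_eq_mul]
  field_simp
  ring

theorem hasDerivAt_lorenzY (ρ : 𝕜) (hK : K ≠ 0)
    (h : IsWaterwheelSolutionAt ν I K q₁ G a₁ b₁ ω (τ / K)) :
    HasDerivAt (lorenzY ν K G a₁)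
      (ρ * lorenzX K ω τ - lorenzX K ω τ * lorenzZ ν K G ρ b₁ τ - lorenzY ν K G a₁ τ) τ := by
  refine (((hasDerivAt_comp_div_const h.hasDerivAt_a₁).const_mul G).div_const
    (ν * K)).congr_deriv ?_
  simp only [lorenzX, lorenzY, lorenzZ, smul_eq_mul]
  field_simp
  ring

theorem hasDerivAt_lorenzZ (hK : K ≠ 0)
    (h : IsWaterwheelSolutionAt ν I K q₁ G a₁ b₁ ω (τ / K)) :
    HasDerivAt (lorenzZ ν K G (rayleighNumber ν K q₁ G) b₁)
      (lorenzX K ω τ * lorenzY ν K G a₁ τ -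
        lorenzZ ν K G (rayleighNumber ν K q₁ G) b₁ τ) τ := by
  refine ((((hasDerivAt_comp_div_const h.hasDerivAt_b₁).const_mul G).div_const
    (ν * K)).const_sub _).congr_deriv ?_
  simp only [rayleighNumber, lorenzX, lorenzY, lorenzZ, smul_eq_mul]
  field_simp
  ring

end IsWaterwheelSolutionAt

theorem waterwheel_to_lorenz_general (hν : ν ≠ 0) (hI : I ≠ 0) (hK : K ≠ 0)
    (h : IsWaterwheelSolutionAt ν I K q₁ G a₁ b₁ ω (τ / K)) :
    IsLorenzSolutionAt (prandtlNumber ν I K) (rayleighNumber ν K q₁ G)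
      (lorenzX K ω) (lorenzY ν K G a₁) (lorenzZ ν K G (rayleighNumber ν K q₁ G) b₁) τ :=
  ⟨h.hasDerivAt_lorenzX hν hI hK, h.hasDerivAt_lorenzY _ hK, h.hasDerivAt_lorenzZ hK⟩

end Waterwheel

/-- **Equivalence of the Malkus–Lorenz waterwheel with the Lorenz system.**
If `(a₁, b₁, ω)` solves the reduced waterwheel system, then with
`G = π g r sin α`, `σ = ν/(IK)`, `ρ = G q₁/(ν K²)`, the rescaled variables
`x(τ) = ω(τ/K)/K`, `y(τ) = G a₁(τ/K)/(νK)`, `z(τ) = ρ - G b₁(τ/K)/(νK)`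
are differentiable and solve the Lorenz system
`x' = σ(y - x)`, `y' = ρx - xz - y`, `z' = xy - z`. -/
theorem waterwheel_to_lorenz (ν I K q₁ g r α G σ ρ : ℝ)
    (hν : 0 < ν) (hI : 0 < I) (hK : 0 < K) (hq₁ : 0 < q₁)
    (hg : 0 < g) (hr : 0 < r) (hα : α ∈ Set.Ioo 0 (Real.pi / 2))
    (hG : G = Real.pi * g * r * Real.sin α)
    (hσ : σ = ν / (I * K))
    (hρ : ρ = G * q₁ / (ν * K ^ 2))
    (a₁ b₁ ω : ℝ → ℝ)
    (hda : Differentiable ℝ a₁) (hdb : Differentiable ℝ b₁)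
    (hdω : Differentiable ℝ ω)
    (heqa : ∀ t, deriv a₁ t = ω t * b₁ t - K * a₁ t)
    (heqb : ∀ t, deriv b₁ t = -(ω t) * a₁ t - K * b₁ t + q₁)
    (heqω : ∀ t, deriv ω t = -(ν / I) * ω t + (G / I) * a₁ t)
    (x y z : ℝ → ℝ)
    (hx : x = fun τ => ω (τ / K) / K)
    (hy : y = fun τ => G * a₁ (τ / K) / (ν * K))
    (hz : z = fun τ => ρ - G * b₁ (τ / K) / (ν * K)) :
    Differentiable ℝ x ∧ Differentiable ℝ y ∧ Differentiable ℝ z ∧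
      (∀ τ, deriv x τ = σ * (y τ - x τ)) ∧
      (∀ τ, deriv y τ = ρ * x τ - x τ * z τ - y τ) ∧
      (∀ τ, deriv z τ = x τ * y τ - z τ) := by
  subst hσ hρ hx hy hz
  have hsol : ∀ t, IsWaterwheelSolutionAt ν I K q₁ G a₁ b₁ ω t :=
    forall_isWaterwheelSolutionAt_iff.2 ⟨hda, hdb, hdω, heqa, heqb, heqω⟩
  exact forall_isLorenzSolutionAt_iff.1 fun τ =>
    waterwheel_to_lorenz_general hν.ne' hI.ne' hK.ne' (hsol (τ / K))
end

section
/- Let σ > 2 and ρ > 1 be real numbers, and consider the polynomial p(λ) = λ³ + (σ+2)λ² + (σ+ρ)λ + 2σ(ρ−1) over ℂ. Then p has a purely imaginary nonzero root (i.e. a root of the form iω with ω ∈ ℝ, ω ≠ 0) if and only if ρ = σ(σ+4)/(σ−2); and in that case the purely imaginary roots are ±i√(σ+ρ). -/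
/-!
At `λ = iω` the even powers of a real cubic contribute its real part and the odd powers its
imaginary part, so for `ω ≠ 0` the root condition `p(iω) = 0` is a pair of linear conditions on
`ω²`. When the cubic is monic the imaginary part fixes `ω²` as the coefficient of `λ`, and the real
part becomes the relation that the outer two coefficients must satisfy. For the Lorenz coefficients
this relation is linear in `ρ`, because the `ρσ` terms combine to `ρ(σ - 2)`.
-/

open Complex

theorem cubic_eval_I_mul (a b c d ω : ℝ) :
    (a : ℂ) * (I * ω) ^ 3 + b * (I * ω) ^ 2 + c * (I * ω) + d =
      ⟨d - b * ω ^ 2, ω * (c - a * ω ^ 2)⟩ := by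
  rw [mk_eq_add_mul_I]
  push_cast
  linear_combination ((a : ℂ) * ω ^ 3 * I + b * ω ^ 2) * I_sq

theorem cubic_eval_I_mul_eq_zero_iff (a b c d : ℝ) {ω : ℝ} (hω : ω ≠ 0) :
    (a : ℂ) * (I * ω) ^ 3 + b * (I * ω) ^ 2 + c * (I * ω) + d = 0 ↔
      a * ω ^ 2 = c ∧ b * ω ^ 2 = d := by
  rw [cubic_eval_I_mul, Complex.ext_iff, zero_re, zero_im, mul_eq_zero, or_iff_right hω,
    sub_eq_zero, sub_eq_zero, eq_comm (a := d), eq_comm (a := c), and_comm]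

theorem monic_cubic_eval_I_mul_eq_zero_iff (a b c : ℝ) {ω : ℝ} (hω : ω ≠ 0) :
    (I * ω : ℂ) ^ 3 + a * (I * ω) ^ 2 + b * (I * ω) + c = 0 ↔ ω ^ 2 = b ∧ a * b = c := by
  have hroot := cubic_eval_I_mul_eq_zero_iff 1 a b c hω
  rw [ofReal_one, one_mul, one_mul] at hroot
  rw [hroot]
  exact and_congr_right fun hsq => by rw [hsq]

theorem exists_ne_zero_and_sq_eq_iff_pos {x : ℝ} : (∃ y : ℝ, y ≠ 0 ∧ y ^ 2 = x) ↔ 0 < x := by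
  constructor
  · rintro ⟨y, hy, rfl⟩
    exact sq_pos_of_ne_zero hy
  · exact fun hx => ⟨√x, (Real.sqrt_pos.mpr hx).ne', Real.sq_sqrt hx.le⟩

theorem exists_monic_cubic_eval_I_mul_eq_zero_iff (a b c : ℝ) :
    (∃ ω : ℝ, ω ≠ 0 ∧ (I * ω : ℂ) ^ 3 + a * (I * ω) ^ 2 + b * (I * ω) + c = 0) ↔
      0 < b ∧ a * b = c := by
  rw [← exists_ne_zero_and_sq_eq_iff_pos, ← exists_and_right]
  refine exists_congr fun ω => ?_
  rw [and_assoc]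
  exact and_congr_right (monic_cubic_eval_I_mul_eq_zero_iff a b c)

theorem monic_cubic_eval_I_mul_eq_zero_iff_eq_sqrt {a b c ω : ℝ} (hb : 0 < b) (hc : a * b = c)
    (hω : ω ≠ 0) :
    (I * ω : ℂ) ^ 3 + a * (I * ω) ^ 2 + b * (I * ω) + c = 0 ↔ ω = √b ∨ ω = -√b := by
  rw [monic_cubic_eval_I_mul_eq_zero_iff a b c hω, and_iff_left hc, ← sq_eq_sq_iff_eq_or_eq_neg,
    Real.sq_sqrt hb.le]

/-- The characteristic polynomial of the Jacobian of the Lorenz system with parameters `σ`, `ρ` and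
`β = 1` at its nontrivial fixed points, as a function on `ℂ`. -/
def lorenzCharPoly (σ ρ : ℝ) (lam : ℂ) : ℂ :=
  lam ^ 3 + ((σ : ℂ) + 2) * lam ^ 2 + ((σ : ℂ) + (ρ : ℂ)) * lam + 2 * (σ : ℂ) * ((ρ : ℂ) - 1)

theorem lorenzCharPoly_eq_monic_cubic (σ ρ : ℝ) (lam : ℂ) :
    lorenzCharPoly σ ρ lam =
      lam ^ 3 + (σ + 2 : ℝ) * lam ^ 2 + (σ + ρ : ℝ) * lam + (2 * σ * (ρ - 1) : ℝ) := by
  push_cast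
  rfl

theorem lorenz_coeff_mul_eq_iff {σ : ℝ} (hσ : σ ≠ 2) (ρ : ℝ) :
    (σ + 2) * (σ + ρ) = 2 * σ * (ρ - 1) ↔ ρ = σ * (σ + 4) / (σ - 2) := by
  rw [eq_div_iff (sub_ne_zero.mpr hσ)]
  constructor <;> intro h <;> linear_combination -h

theorem lorenz_hopf_condition_general {σ : ℝ} (hσ : σ ≠ 2) (ρ : ℝ) :
    ((∃ ω : ℝ, ω ≠ 0 ∧ lorenzCharPoly σ ρ (I * ω) = 0) ↔
        0 < σ + ρ ∧ ρ = σ * (σ + 4) / (σ - 2)) ∧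
      (0 < σ + ρ ∧ ρ = σ * (σ + 4) / (σ - 2) →
        ∀ ω : ℝ, ω ≠ 0 →
          (lorenzCharPoly σ ρ (I * ω) = 0 ↔ ω = √(σ + ρ) ∨ ω = -√(σ + ρ))) := by
  simp only [lorenzCharPoly_eq_monic_cubic, ← lorenz_coeff_mul_eq_iff hσ]
  exact ⟨exists_monic_cubic_eval_I_mul_eq_zero_iff _ _ _,
    fun ⟨hpos, hcoeff⟩ _ hω => monic_cubic_eval_I_mul_eq_zero_iff_eq_sqrt hpos hcoeff hω⟩

/-- **Hopf bifurcation condition for the Lorenz nontrivial fixed points.**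
For `σ > 2` and `ρ > 1`, the characteristic polynomial
`p(λ) = λ³ + (σ+2)λ² + (σ+ρ)λ + 2σ(ρ-1)` has a purely imaginary nonzero
root `iω` (with `ω ∈ ℝ, ω ≠ 0`) if and only if `ρ = σ(σ+4)/(σ-2)`;
in that case the purely imaginary roots are exactly `± i √(σ+ρ)`. -/
theorem lorenz_hopf_condition (σ ρ : ℝ) (hσ : 2 < σ) (hρ : 1 < ρ)
    (p : ℂ → ℂ)
    (hp : p = fun lam => lam ^ 3 + ((σ : ℂ) + 2) * lam ^ 2 +
      ((σ : ℂ) + (ρ : ℂ)) * lam + 2 * (σ : ℂ) * ((ρ : ℂ) - 1)) :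
    ((∃ ω : ℝ, ω ≠ 0 ∧ p (Complex.I * (ω : ℂ)) = 0) ↔
        ρ = σ * (σ + 4) / (σ - 2)) ∧
      (ρ = σ * (σ + 4) / (σ - 2) →
        ∀ ω : ℝ, ω ≠ 0 →
          (p (Complex.I * (ω : ℂ)) = 0 ↔
            ω = Real.sqrt (σ + ρ) ∨ ω = -Real.sqrt (σ + ρ))) := by
  have hpos : 0 < σ + ρ := by linarith
  simpa only [hp, hpos, true_and] using! lorenz_hopf_condition_general hσ.ne' ρ
end
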